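/- Let G be any set of atomic constraints over a finite set X of clocks and let R ⊆ X. For all clock valuations v, v': if v ⊑_{wp(⊑_G, R)} v' then [R]v ⊑_G [R]v'. -/

import Mathlib

open scoped NNReal

/-! ## Atomic constraints over a set of clocks -/

/-- Comparison operator `◁ ∈ {<, ≤}`. -/
inductive Ineq : Type where
  | lt : Ineq
  | le : Ineq
deriving DecidableEq

/-- Interpretation of a comparison operator on reals. -/
def Ineq.holds : Ineq → ℝ → ℝ → Prop
  | .lt, a, b => a < b
  | .le, a, b => a ≤ b

/-- Atomic constraints over clocks `X`:
`upper x o c` is `x ◁ c` (c ∈ ℕ), `lower c o x` is `c ◁ x` (c ∈ ℕ),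
`diag x y o d` is `x - y ◁ d` (d ∈ ℤ). -/
inductive Constr (X : Type) : Type where
  | upper : X → Ineq → ℕ → Constr X
  | lower : ℕ → Ineq → X → Constr X
  | diag : X → X → Ineq → ℤ → Constr X
deriving DecidableEq

namespace Constr

/-- Is the constraint a diagonal constraint `x - y ◁ d`? -/
def isDiag {X : Type} : Constr X → Bool
  | .diag _ _ _ _ => true
  | _ => false

/-- The integer constant of a constraint. -/
def constOf {X : Type} : Constr X → ℤ
  | .upper _ _ c => (c : ℤ)
  | .lower c _ _ => (c : ℤ)
  | .diag _ _ _ d => d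

/-- Satisfaction of a constraint by a clock valuation `v : X → ℝ≥0`. -/
def sat {X : Type} (v : X → ℝ≥0) : Constr X → Prop
  | .upper x o c => o.holds (v x : ℝ) (c : ℝ)
  | .lower c o x => o.holds (c : ℝ) (v x : ℝ)
  | .diag x y o d => o.holds ((v x : ℝ) - (v y : ℝ)) (d : ℝ)

end Constr

/-- Time elapse: `v + δ`. -/
def shift {X : Type} (v : X → ℝ≥0) (δ : ℝ≥0) : X → ℝ≥0 := fun x => v x + δ

/-- The relation `v ⊑_G v'`: for all `φ ∈ G` and all delays `δ ≥ 0`,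
`v + δ ⊨ φ` implies `v' + δ ⊨ φ`. -/
def simG {X : Type} (G : Set (Constr X)) (v v' : X → ℝ≥0) : Prop :=
  ∀ φ ∈ G, ∀ δ : ℝ≥0, Constr.sat (shift v δ) φ → Constr.sat (shift v' δ) φ

/-- `Z ⊑_G Z'` on sets of valuations. -/
def simGZ {X : Type} (G : Set (Constr X)) (Z Z' : Set (X → ℝ≥0)) : Prop :=
  ∀ v ∈ Z, ∃ v' ∈ Z', simG G v v'

open Classical in
/-- `[R]v`: reset the clocks in `R` to `0`. -/
noncomputable def reset {X : Type} (R : Set X) (v : X → ℝ≥0) : X → ℝ≥0 :=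
  fun x => if x ∈ R then 0 else v x

/-- Weakest precondition `wp(⊑_φ, R)` of a single constraint over a reset. -/
def wpReset {X : Type} (R : Set X) : Constr X → Set (Constr X)
  | .upper x o c => {ψ | x ∉ R ∧ ψ = .upper x o c}
  | .lower c o x => {ψ | x ∉ R ∧ ψ = .lower c o x}
  | .diag x y o d =>
      {ψ | (x ∉ R ∧ y ∉ R ∧ ψ = .diag x y o d) ∨
           (x ∉ R ∧ y ∈ R ∧ 0 ≤ d ∧ ψ = .upper x o d.toNat) ∨
           (x ∈ R ∧ y ∉ R ∧ 0 ≤ -d ∧ ψ = .lower (-d).toNat o y)}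

/-- Weakest precondition `wp(⊑_G, R)` of a set of constraints over a reset. -/
def wpResetSet {X : Type} (R : Set X) (G : Set (Constr X)) : Set (Constr X) :=
  ⋃ φ ∈ G, wpReset R φ

/-! ## Timed automata -/

/-- A transition: source state, guard (finite conjunction of constraints),
reset set, target state. -/
abbrev TTrans (Q X : Type) : Type := Q × Finset (Constr X) × Set X × Q

def TTrans.src {Q X : Type} (t : TTrans Q X) : Q := t.1
def TTrans.grd {Q X : Type} (t : TTrans Q X) : Finset (Constr X) := t.2.1
def TTrans.rst {Q X : Type} (t : TTrans Q X) : Set X := t.2.2.1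
def TTrans.tgt {Q X : Type} (t : TTrans Q X) : Q := t.2.2.2

/-- A timed automaton. -/
structure TA (Q X : Type) : Type where
  init : Q
  trans : Finset (TTrans Q X)
  acc : Set Q

/-- Action step of a timed automaton along transition `t`. -/
def Step {Q X : Type} (A : TA Q X) (t : TTrans Q X) (c c' : Q × (X → ℝ≥0)) : Prop :=
  t ∈ A.trans ∧ TTrans.src t = c.1 ∧ (∀ φ ∈ TTrans.grd t, Constr.sat c.2 φ) ∧
    c'.1 = TTrans.tgt t ∧ c'.2 = reset (TTrans.rst t) c.2

/-- `r` is a simulation on the configurations of `A`: a reflexive transitive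
relation, relating only configurations with equal states, compatible with
delays and action transitions. -/
def IsSimulation {Q X : Type} (A : TA Q X)
    (r : (Q × (X → ℝ≥0)) → (Q × (X → ℝ≥0)) → Prop) : Prop :=
  Reflexive r ∧ Transitive r ∧
  ∀ q v q' v', r (q, v) (q', v') →
    q = q' ∧
    (∀ δ : ℝ≥0, ∃ δ' : ℝ≥0, r (q, shift v δ) (q, shift v' δ')) ∧
    (∀ t c₁, Step A t (q, v) c₁ →
      ∃ v₁', Step A t (q, v') (c₁.1, v₁') ∧ r c₁ (c₁.1, v₁'))

/-- The state-based guard equations: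
`G(q) = ⋃_{(q,g,R,q₁) ∈ T} ({g} ∪ wp(⊑_{G(q₁)}, R))`. -/
def GuardEq {Q X : Type} (A : TA Q X) (G : Q → Set (Constr X)) : Prop :=
  ∀ q, G q = ⋃ t ∈ A.trans, ⋃ (_ : TTrans.src t = q),
    ((TTrans.grd t : Set (Constr X)) ∪ wpResetSet (TTrans.rst t) (G (TTrans.tgt t)))

/-! ## LU bounds -/

def lowerConstAt {X : Type} [DecidableEq X] (x : X) : Constr X → WithBot ℕ
  | .lower c _ y => if y = x then (c : WithBot ℕ) else ⊥
  | _ => ⊥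

def upperConstAt {X : Type} [DecidableEq X] (x : X) : Constr X → WithBot ℕ
  | .upper y _ c => if y = x then (c : WithBot ℕ) else ⊥
  | _ => ⊥

/-- `L_G(x)`: maximum constant among lower-bound constraints `c ◁ x` in `G`
(`⊥ = -∞` if none). -/
def Lbound {X : Type} [DecidableEq X] (G : Finset (Constr X)) (x : X) : WithBot ℕ :=
  G.sup (lowerConstAt x)

/-- `U_G(x)`: maximum constant among upper-bound constraints `x ◁ c` in `G`
(`⊥ = -∞` if none). -/
def Ubound {X : Type} [DecidableEq X] (G : Finset (Constr X)) (x : X) : WithBot ℕ :=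
  G.sup (upperConstAt x)

/-- The LU simulation `v ≼_LU v'` for bounds functions `L U : X → ℕ ∪ {-∞}`. -/
def luSim {X : Type} (L U : X → WithBot ℕ) (v v' : X → ℝ≥0) : Prop :=
  ∀ x : X,
    (v' x < v x → (L x).map (fun c : ℕ => (c : ℝ)) < ((v' x : ℝ) : WithBot ℝ)) ∧
    (v x < v' x → (U x).map (fun c : ℕ => (c : ℝ)) < ((v x : ℝ) : WithBot ℝ))

/-- The relation `v ⊑^LU_G v'`: `v ≼_{LU(G)} v'` and every diagonal constraint
of `G` satisfied by `v` is satisfied by `v'`. -/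
def luglu {X : Type} [DecidableEq X] (G : Finset (Constr X)) (v v' : X → ℝ≥0) : Prop :=
  luSim (Lbound G) (Ubound G) v v' ∧
    ∀ φ ∈ G, φ.isDiag → Constr.sat v φ → Constr.sat v' φ

/-- Lifting a relation on valuations to sets of valuations. -/
def zoneRel {X : Type} (r : (X → ℝ≥0) → (X → ℝ≥0) → Prop) (Z Z' : Set (X → ℝ≥0)) : Prop :=
  ∀ v ∈ Z, ∃ v' ∈ Z', r v v'

/-! ## Runs of timed automata -/

/-- `stepsFrom A c l`: the alternating delay-action sequence `l` is a valid
sequence of steps of `A` starting at configuration `c`. -/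
def stepsFrom {Q X : Type} (A : TA Q X) :
    (Q × (X → ℝ≥0)) → List (ℝ≥0 × TTrans Q X) → Prop
  | _, [] => True
  | c, (δ, t) :: l =>
      t ∈ A.trans ∧ TTrans.src t = c.1 ∧
      (∀ φ ∈ TTrans.grd t, Constr.sat (shift c.2 δ) φ) ∧
      stepsFrom A (TTrans.tgt t, reset (TTrans.rst t) (shift c.2 δ)) l

/-- Configuration reached after a sequence of delay-action steps. -/
noncomputable def endConfig {Q X : Type} :
    (Q × (X → ℝ≥0)) → List (ℝ≥0 × TTrans Q X) → (Q × (X → ℝ≥0))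
  | c, [] => c
  | c, (δ, t) :: l => endConfig (TTrans.tgt t, reset (TTrans.rst t) (shift c.2 δ)) l

/-- A run of `A`: a valid sequence of delay-action steps from `(q₀, 0̄)`. -/
def TA.Run {Q X : Type} (A : TA Q X) : Type :=
  {l : List (ℝ≥0 × TTrans Q X) // stepsFrom A (A.init, fun _ => 0) l}

/-- A run is accepting if it ends in an accepting state. -/
def TA.Accepting {Q X : Type} (A : TA Q X) (r : A.Run) : Prop :=
  (endConfig (A.init, fun _ => 0) r.val).1 ∈ A.acc

/-- `A` is diagonal-free: no guard contains a diagonal constraint. -/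
def DiagFree {Q X : Type} (A : TA Q X) : Prop :=
  ∀ t ∈ A.trans, ∀ φ ∈ TTrans.grd t, ¬ φ.isDiag

/-- The (finite) set of diagonal constraints occurring in guards of `A`. -/
def diagGuards {Q X : Type} [DecidableEq X] (A : TA Q X) : Finset (Constr X) :=
  A.trans.biUnion fun t => (TTrans.grd t).filter fun φ => φ.isDiag

/-! ## Updateable timed automata -/

/-- Atomic update of a clock: `x := c` or `x := y + d`. -/
inductive AtomicUp (X : Type) : Type where
  | const : ℕ → AtomicUp X
  | add : X → ℤ → AtomicUp X
deriving DecidableEq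

/-- `up(v) : X → ℝ` (may be negative). -/
def applyUpd {X : Type} (up : X → AtomicUp X) (v : X → ℝ≥0) : X → ℝ :=
  fun x => match up x with
    | .const c => (c : ℝ)
    | .add y d => (v y : ℝ) + (d : ℝ)

/-- Weakest precondition `wp(⊑_φ, up)` of a single constraint over an update. -/
def wpUpd {X : Type} [DecidableEq X] (up : X → AtomicUp X) : Constr X → Set (Constr X)
  | .upper x o c =>
      match up x with
      | .const _ => ∅
      | .add y d => if 0 ≤ (c : ℤ) - d then {Constr.upper y o ((c : ℤ) - d).toNat} else ∅
  | .lower c o x =>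
      match up x with
      | .const _ => ∅
      | .add y d => if 0 ≤ (c : ℤ) - d then {Constr.lower ((c : ℤ) - d).toNat o y} else ∅
  | .diag x y o c =>
      match up x, up y with
      | .const _, .const _ => ∅
      | .add y₁ d₁, .const c₂ =>
          if 0 ≤ c + (c₂ : ℤ) - d₁ then {Constr.upper y₁ o (c + (c₂ : ℤ) - d₁).toNat} else ∅
      | .const c₁, .add y₂ d₂ =>
          if 0 ≤ (c₁ : ℤ) - d₂ - c then {Constr.lower ((c₁ : ℤ) - d₂ - c).toNat o y₂} else ∅
      | .add y₁ d₁, .add y₂ d₂ =>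
          if y₁ = y₂ then ∅ else {Constr.diag y₁ y₂ o (c - d₁ + d₂)}

/-- Weakest precondition `wp(⊑_G, up)` of a set of constraints over an update. -/
def wpUpdSet {X : Type} [DecidableEq X] (up : X → AtomicUp X) (G : Set (Constr X)) :
    Set (Constr X) :=
  ⋃ φ ∈ G, wpUpd up φ

/-- The set of constraints `{0 ≤ x | x ∈ X}`. -/
def nonnegConstrs (X : Type) : Set (Constr X) := {φ | ∃ x : X, φ = Constr.lower 0 Ineq.le x}

/-- A transition of an updateable timed automaton: source, guard, update, target. -/
abbrev UTrans (Q X : Type) : Type := Q × Finset (Constr X) × (X → AtomicUp X) × Q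

def UTrans.src {Q X : Type} (t : UTrans Q X) : Q := t.1
def UTrans.grd {Q X : Type} (t : UTrans Q X) : Finset (Constr X) := t.2.1
def UTrans.upd {Q X : Type} (t : UTrans Q X) : X → AtomicUp X := t.2.2.1
def UTrans.tgt {Q X : Type} (t : UTrans Q X) : Q := t.2.2.2

/-- An updateable timed automaton. -/
structure UTA (Q X : Type) : Type where
  init : Q
  trans : Finset (UTrans Q X)
  acc : Set Q

/-- Action step of an updateable timed automaton along transition `t`:
the guard holds, `up(v) ≥ 0`, and the new valuation is `up(v)`. -/
def UStep {Q X : Type} (A : UTA Q X) (t : UTrans Q X) (c c' : Q × (X → ℝ≥0)) : Prop :=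
  t ∈ A.trans ∧ UTrans.src t = c.1 ∧ (∀ φ ∈ UTrans.grd t, Constr.sat c.2 φ) ∧
    c'.1 = UTrans.tgt t ∧ ∀ x, (c'.2 x : ℝ) = applyUpd (UTrans.upd t) c.2 x

/-- `r` is a simulation on configurations of an updateable timed automaton. -/
def IsSimulationU {Q X : Type} (A : UTA Q X)
    (r : (Q × (X → ℝ≥0)) → (Q × (X → ℝ≥0)) → Prop) : Prop :=
  Reflexive r ∧ Transitive r ∧
  ∀ q v q' v', r (q, v) (q', v') →
    q = q' ∧
    (∀ δ : ℝ≥0, ∃ δ' : ℝ≥0, r (q, shift v δ) (q, shift v' δ')) ∧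
    (∀ t c₁, UStep A t (q, v) c₁ →
      ∃ v₁', UStep A t (q, v') (c₁.1, v₁') ∧ r c₁ (c₁.1, v₁'))

/-- State-based guard equations for updateable timed automata. -/
def GuardEqU {Q X : Type} [DecidableEq X] (A : UTA Q X) (G : Q → Set (Constr X)) : Prop :=
  ∀ q, G q = ⋃ t ∈ A.trans, ⋃ (_ : UTrans.src t = q),
    ((UTrans.grd t : Set (Constr X)) ∪ wpUpdSet (UTrans.upd t) (nonnegConstrs X)
      ∪ wpUpdSet (UTrans.upd t) (G (UTrans.tgt t)))

/-- Kleene iterates `G^i(q)` of the state-based guard equations. -/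
def iterG {Q X : Type} [DecidableEq X] (A : UTA Q X) : ℕ → Q → Set (Constr X)
  | 0 => fun q => ⋃ t ∈ A.trans, ⋃ (_ : UTrans.src t = q),
      ((UTrans.grd t : Set (Constr X)) ∪ wpUpdSet (UTrans.upd t) (nonnegConstrs X))
  | (i + 1) => fun q => iterG A i q ∪
      (⋃ t ∈ A.trans, ⋃ (_ : UTrans.src t = q),
        wpUpdSet (UTrans.upd t) (iterG A i (UTrans.tgt t)))

/-- `G^{i+1}(q)` is coloured red: a new diagonal constraint was added, or a new
non-diagonal constraint whose constant is strictly bigger than the constant of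
every non-diagonal constraint of the same kind on the same clock in `G^i(q)`. -/
def RedAt {Q X : Type} [DecidableEq X] (A : UTA Q X) : ℕ → Q → Prop
  | 0, _ => False
  | (i + 1), q =>
      (∃ φ : Constr X, φ ∈ iterG A (i + 1) q ∧ φ ∉ iterG A i q ∧ φ.isDiag) ∨
      (∃ (x : X) (o : Ineq) (c : ℕ),
        Constr.upper x o c ∈ iterG A (i + 1) q ∧ Constr.upper x o c ∉ iterG A i q ∧
        ∀ (o' : Ineq) (c' : ℕ), Constr.upper x o' c' ∈ iterG A i q → c' < c) ∨
      (∃ (x : X) (o : Ineq) (c : ℕ),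
        Constr.lower c o x ∈ iterG A (i + 1) q ∧ Constr.lower c o x ∉ iterG A i q ∧
        ∀ (o' : Ineq) (c' : ℕ), Constr.lower c' o' x ∈ iterG A i q → c' < c)

/-- `G^i(q)` is coloured green. -/
def GreenAt {Q X : Type} [DecidableEq X] (A : UTA Q X) (i : ℕ) (q : Q) : Prop :=
  ¬ RedAt A i q

/-- Absolute value of the constant of an atomic update. -/
def updBound {X : Type} : AtomicUp X → ℕ
  | .const c => c
  | .add _ d => d.natAbs

/-! A constraint with no clock in `R` keeps its meaning under the reset, and a constraint with all
its clocks in `R` no longer distinguishes valuations after it. There remains a diagonal constraint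
with exactly one reset clock. Its truth is invariant under time elapse, so only the delay `0`
matters: after the reset it is a non-diagonal constraint on the other clock, with constant `d` or
`-d`. When that constant is negative, nonnegativity of clocks makes the constraint identically
false or identically true. -/

section ResetPrecondition

theorem Ineq.holds_of_lt {o : Ineq} {a b : ℝ} (h : a < b) : o.holds a b := by
  cases o
  exacts [h, h.le]

theorem Ineq.holds.le {o : Ineq} {a b : ℝ} (h : o.holds a b) : a ≤ b := by
  cases o
  exacts [le_of_lt h, h]

theorem Ineq.holds_neg_neg (o : Ineq) (a b : ℝ) : o.holds (-a) (-b) ↔ o.holds b a := by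
  cases o
  exacts [neg_lt_neg_iff, neg_le_neg_iff]

variable {X : Type}

/-- The set of clocks on which a constraint depends. -/
def Constr.clocks : Constr X → Set X
  | .upper x _ _ => {x}
  | .lower _ _ x => {x}
  | .diag x y _ _ => {x, y}

variable {R : Set X} {S T : Set (Constr X)} {φ : Constr X} {v v' w : X → ℝ≥0} {x y : X}

theorem Constr.sat_congr (h : Set.EqOn v w φ.clocks) : Constr.sat v φ ↔ Constr.sat w φ := by
  cases φ with
  | upper x o c => simp only [Constr.sat, h (Set.mem_singleton x)]
  | lower c o x => simp only [Constr.sat, h (Set.mem_singleton x)]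
  | diag x y o d =>
    simp only [Constr.sat, h (Set.mem_insert x {y}), h (Set.mem_insert_of_mem x rfl)]

theorem Constr.sat_shift_diag (v : X → ℝ≥0) (δ : ℝ≥0) (x y : X) (o : Ineq) (d : ℤ) :
    Constr.sat (shift v δ) (.diag x y o d) ↔ Constr.sat v (.diag x y o d) := by
  simp only [Constr.sat, shift, NNReal.coe_add, add_sub_add_right_eq_sub]

theorem shift_zero (v : X → ℝ≥0) : shift v 0 = v :=
  funext fun x => add_zero (v x)

theorem simG.mono (h : simG T v v') (hST : S ⊆ T) : simG S v v' :=
  fun φ hφ => h φ (hST hφ)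

theorem simG.trans (h : simG S v w) (h' : simG S w v') : simG S v v' :=
  fun φ hφ δ hs => h' φ hφ δ (h φ hφ δ hs)

theorem simG.sat (h : simG S v v') (hφ : φ ∈ S) (hs : Constr.sat v φ) : Constr.sat v' φ := by
  simpa only [shift_zero] using h φ hφ 0 (by rwa [shift_zero])

theorem simG_singleton_of_eqOn (h : Set.EqOn v v' φ.clocks) : simG {φ} v v' := by
  rintro _ rfl δ
  exact (Constr.sat_congr fun x hx => congrArg (· + δ) (h hx)).mp

theorem simG_singleton_diag {o : Ineq} {d : ℤ} :
    simG {.diag x y o d} v v' ↔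
      (Constr.sat v (.diag x y o d) → Constr.sat v' (.diag x y o d)) := by
  simp only [simG, Set.mem_singleton_iff, forall_eq, Constr.sat_shift_diag, forall_const]

theorem reset_of_mem (hx : x ∈ R) (v : X → ℝ≥0) : reset R v x = 0 :=
  if_pos hx

theorem reset_of_notMem (hx : x ∉ R) (v : X → ℝ≥0) : reset R v x = v x :=
  if_neg hx

theorem simG_reset_of_clocks_subset (hφ : φ.clocks ⊆ R) (v v' : X → ℝ≥0) :
    simG {φ} (reset R v) (reset R v') :=
  simG_singleton_of_eqOn fun _ hx => by rw [reset_of_mem (hφ hx), reset_of_mem (hφ hx)]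

theorem simG.reset_of_disjoint_clocks (hφ : Disjoint φ.clocks R) (h : simG {φ} v v') :
    simG {φ} (reset R v) (reset R v') := by
  have reset_eqOn (w : X → ℝ≥0) : Set.EqOn (reset R w) w φ.clocks :=
    fun _ hx => reset_of_notMem (Set.disjoint_left.mp hφ hx) w
  exact (simG_singleton_of_eqOn (reset_eqOn v)).trans
    (h.trans (simG_singleton_of_eqOn (reset_eqOn v').symm))

theorem mem_wpReset_of_disjoint_clocks (hφ : Disjoint φ.clocks R) : φ ∈ wpReset R φ := by
  cases φ with
  | upper x o c => exact ⟨Set.disjoint_singleton_left.mp hφ, rfl⟩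
  | lower c o x => exact ⟨Set.disjoint_singleton_left.mp hφ, rfl⟩
  | diag x y o d =>
    obtain ⟨hx, hy⟩ := Set.disjoint_insert_left.mp hφ
    exact .inl ⟨hx, Set.disjoint_singleton_left.mp hy, rfl⟩

theorem sat_reset_diag_of_mem_right (hx : x ∉ R) (hy : y ∈ R) (v : X → ℝ≥0) (o : Ineq) (d : ℤ) :
    Constr.sat (reset R v) (.diag x y o d) ↔ o.holds (v x) d := by
  simp only [Constr.sat, reset_of_notMem hx, reset_of_mem hy, NNReal.coe_zero, sub_zero]

theorem sat_reset_diag_of_mem_left (hx : x ∈ R) (hy : y ∉ R) (v : X → ℝ≥0) (o : Ineq) (d : ℤ) :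
    Constr.sat (reset R v) (.diag x y o d) ↔ o.holds (-d) (v y) := by
  rw [← Ineq.holds_neg_neg, neg_neg]
  simp only [Constr.sat, reset_of_mem hx, reset_of_notMem hy, NNReal.coe_zero, zero_sub]

theorem simG_reset_diag_of_mem_right {o : Ineq} {d : ℤ} (hx : x ∉ R) (hy : y ∈ R)
    (h : simG (wpReset R (.diag x y o d)) v v') :
    simG {.diag x y o d} (reset R v) (reset R v') := by
  rw [simG_singleton_diag, sat_reset_diag_of_mem_right hx hy, sat_reset_diag_of_mem_right hx hy]
  intro hs
  have hd : 0 ≤ d := Int.cast_nonneg_iff.mp ((v x).coe_nonneg.trans hs.le)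
  obtain ⟨c, rfl⟩ := Int.eq_ofNat_of_zero_le hd
  have upper_mem : .upper x o c ∈ wpReset R (.diag x y o c) := .inr (.inl ⟨hx, hy, hd, rfl⟩)
  simp only [Int.cast_natCast] at hs ⊢
  exact h.sat upper_mem hs

theorem simG_reset_diag_of_mem_left {o : Ineq} {d : ℤ} (hx : x ∈ R) (hy : y ∉ R)
    (h : simG (wpReset R (.diag x y o d)) v v') :
    simG {.diag x y o d} (reset R v) (reset R v') := by
  rw [simG_singleton_diag, sat_reset_diag_of_mem_left hx hy, sat_reset_diag_of_mem_left hx hy]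
  intro hs
  rcases lt_or_ge 0 d with hd | hd
  · exact Ineq.holds_of_lt ((neg_neg_of_pos (Int.cast_pos.mpr hd)).trans_le (v' y).coe_nonneg)
  · obtain ⟨c, rfl⟩ := Int.exists_eq_neg_ofNat hd
    have lower_mem : .lower c o y ∈ wpReset R (.diag x y o (-c)) :=
      .inr (.inr ⟨hx, hy, neg_nonneg.mpr hd, by simp only [neg_neg, Int.toNat_natCast]⟩)
    simp only [Int.cast_neg, Int.cast_natCast, neg_neg] at hs ⊢
    exact h.sat lower_mem hs

theorem simG_singleton_reset (h : simG (wpReset R φ) v v') :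
    simG {φ} (reset R v) (reset R v') := by
  by_cases hsub : φ.clocks ⊆ R
  · exact simG_reset_of_clocks_subset hsub v v'
  by_cases hdisj : Disjoint φ.clocks R
  · have hφ : {φ} ⊆ wpReset R φ :=
      Set.singleton_subset_iff.mpr (mem_wpReset_of_disjoint_clocks hdisj)
    exact (h.mono hφ).reset_of_disjoint_clocks hdisj
  have clocks_ne_singleton (x : X) : φ.clocks ≠ {x} := fun hx => by
    rw [hx, Set.singleton_subset_iff] at hsub
    exact hdisj (hx ▸ Set.disjoint_singleton_left.mpr hsub)
  cases φ with
  | upper x o c => exact absurd rfl (clocks_ne_singleton x)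
  | lower c o x => exact absurd rfl (clocks_ne_singleton x)
  | diag x y o d =>
    simp only [Constr.clocks, Set.insert_subset_iff, Set.singleton_subset_iff,
      Set.disjoint_insert_left, Set.disjoint_singleton_left] at hsub hdisj
    by_cases hx : x ∈ R
    · exact simG_reset_diag_of_mem_left hx (fun hy => hsub ⟨hx, hy⟩) h
    · exact simG_reset_diag_of_mem_right hx (not_not.mp fun hy => hdisj ⟨hx, hy⟩) h

end ResetPrecondition

theorem stmt1_general {X : Type} (G : Set (Constr X)) (R : Set X)
    (v v' : X → ℝ≥0) (h : simG (wpResetSet R G) v v') :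
    simG G (reset R v) (reset R v') := by
  intro φ hφ
  have hwp : wpReset R φ ⊆ wpResetSet R G := Set.subset_biUnion_of_mem hφ
  exact simG_singleton_reset (h.mono hwp) φ rfl

/-! ## The statement -/

theorem stmt1 {X : Type} [Fintype X] (G : Set (Constr X)) (R : Set X)
    (v v' : X → ℝ≥0) (h : simG (wpResetSet R G) v v') :
    simG G (reset R v) (reset R v') :=
  stmt1_general G R v v' h
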